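/- Let δ > 0 and N > 0. There is a constant C = C(N, δ, ω, ω₀) such that the following holds for all real Q ≥ 1: if r ∈ ℤ² satisfies Q^{1/2}/2 ≤ |r| ≤ Q^{1/2}, k, q ∈ ℕ satisfy kq ≤ Q, and w ∈ ℝ² satisfies kq(Q|w·r| + 1) ≤ Q^{1−δ}, then | p_{2,r,k,q}(w) − (c Q^{1/2}/|r|) · ω̂₀( (Q^{3/2}/|r|) (w·r^⊥) ) | ≤ C Q^{−N}, where ω̂₀(t) = ∫_ℝ ω₀(x) e(−xt) dx is the Fourier transform of ω₀. -/

import Mathlib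

open MeasureTheory Real Matrix Finset

noncomputable section

/-- `e(x) = exp(2πix)`. -/
def e2pi (x : ℝ) : ℂ := Complex.exp (2 * Real.pi * Complex.I * x)

/-- Euclidean norm on `ℝ²`. -/
def nrm2 (x : ℝ × ℝ) : ℝ := Real.sqrt (x.1 ^ 2 + x.2 ^ 2)

/-- Dot product on `ℝ²`. -/
def dot2 (x y : ℝ × ℝ) : ℝ := x.1 * y.1 + x.2 * y.2

/-- `x^⊥ = (x₂, -x₁)`. -/
def perp2 (x : ℝ × ℝ) : ℝ × ℝ := (x.2, -x.1)

/-- `δ_n` for `n ∈ ℤ²`. -/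
def deltaInt (n : ℤ × ℤ) : ℂ := if n = 0 then 1 else 0

/-- `h(y,z) = Σ_{j ≥ 1} (1/(yj)) (ω(yj) − ω(|z|/(yj)))`. -/
def hFun (ω : ℝ → ℝ) (y z : ℝ) : ℝ :=
  ∑' j : ℕ+, (1 / (y * ((j : ℕ) : ℝ))) *
    (ω (y * ((j : ℕ) : ℝ)) - ω (|z| / (y * ((j : ℕ) : ℝ))))

/-- `c = (∫_{ℝ²} ω(|x|) dx)⁻¹`. -/
def cConst (ω : ℝ → ℝ) : ℝ := (∫ x : ℝ × ℝ, ω (nrm2 x))⁻¹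

/-- The function `p_{1,q}`. -/
def p1 (ω ω₀ : ℝ → ℝ) (Q : ℝ) (q : ℕ) (w : ℝ × ℝ) : ℂ :=
  -(cConst ω / Q : ℝ) * ∫ x : ℝ × ℝ,
    (((ω₀ (nrm2 x / Q ^ ((3 : ℝ) / 2)) *
      ∑' j : ℕ+, (1 / ((q : ℝ) * ((j : ℕ) : ℝ)) ^ 2) *
        ω (nrm2 x / (((j : ℕ) : ℝ) * (q : ℝ) * Q ^ ((1 : ℝ) / 2)))) : ℝ) : ℂ) *
      e2pi (-(dot2 w x))

/-- The function `p_{2,r,k,q}` (with `q` allowed to be a real parameter). -/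
def p2 (ω ω₀ : ℝ → ℝ) (Q : ℝ) (r : ℤ × ℤ) (k : ℕ) (q : ℝ) (w : ℝ × ℝ) : ℂ :=
  ((cConst ω / Q ^ 3 : ℝ) : ℂ) * ∫ x : ℝ × ℝ,
    (((ω₀ (nrm2 x / Q ^ ((3 : ℝ) / 2)) *
      hFun ω ((k : ℝ) * q / Q) (((r.1 : ℝ) * x.1 + (r.2 : ℝ) * x.2) / Q ^ 2)) : ℝ) : ℂ) *
      e2pi (-(dot2 w x))

/-- The lattice `Λ(a,q) = {k a + q y}` as a subset of `ℤ²`. -/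
def Lambda (a : ℤ × ℤ) (q : ℕ) : Set (ℤ × ℤ) :=
  {v | ∃ k : ℤ, ∃ y : ℤ × ℤ, v = (k * a.1 + (q : ℤ) * y.1, k * a.2 + (q : ℤ) * y.2)}

/-- `k(r) = gcd(r₁,r₂)/gcd(gcd(r₁,r₂),q)`. -/
def kOf (r : ℤ × ℤ) (q : ℕ) : ℕ := Int.gcd r.1 r.2 / Nat.gcd (Int.gcd r.1 r.2) q

/-- The function `p_{Λ(a,q)}`. -/
def pLambda (ω ω₀ : ℝ → ℝ) (Q : ℝ) (q : ℕ) (a : ℤ × ℤ) (w : ℝ × ℝ) : ℂ :=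
  p1 ω ω₀ Q q w +
    ∑' r : ℤ × ℤ,
      Set.indicator {r : ℤ × ℤ | r ∈ Lambda a q ∧ r ≠ 0}
        (fun r => ((ω (nrm2 ((r.1 : ℝ), (r.2 : ℝ)) / Q ^ ((1 : ℝ) / 2)) : ℝ) : ℂ) *
          p2 ω ω₀ Q r (kOf r q) (q : ℝ) w) r

/-- Reduced residues `a mod q` (canonical representatives) with `gcd(a₁,a₂,q)=1`. -/
def residues (q : ℕ) : Finset (ℕ × ℕ) :=
  ((Finset.range q) ×ˢ (Finset.range q)).filter (fun a => Nat.gcd (Nat.gcd a.1 a.2) q = 1)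

/-- Normalized directional derivative along `ξ`. -/
def dirDeriv (ξ : ℝ × ℝ) (f : ℝ × ℝ → ℂ) : ℝ × ℝ → ℂ :=
  fun w => fderiv ℝ f w (ξ.1 / nrm2 ξ, ξ.2 / nrm2 ξ)

/-- Fourier transform `ω̂₀(t) = ∫ ω₀(x) e(−xt) dx`. -/
def fourierW0 (ω₀ : ℝ → ℝ) (t : ℝ) : ℂ := ∫ x : ℝ, ((ω₀ x : ℝ) : ℂ) * e2pi (-(x * t))

/-- `|M(w)x|` for the 3×2 matrix `M(w)`. -/
def Mnorm (Q : ℝ) (w : ℝ × ℝ) (x : ℝ × ℝ) : ℝ :=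
  Real.sqrt (x.1 ^ 2 / Q + x.2 ^ 2 / Q + Q ^ 2 * (w.1 * x.2 - w.2 * x.1) ^ 2)

/-- `μ_{M(w)}(Λ(a,q))`: infimum of `|M(w)x|` over nonzero lattice points. -/
def muM (Q : ℝ) (w : ℝ × ℝ) (a : ℤ × ℤ) (q : ℕ) : ℝ :=
  sInf {t : ℝ | ∃ v : ℤ × ℤ, v ∈ Lambda a q ∧ v ≠ 0 ∧ t = Mnorm Q w ((v.1 : ℝ), (v.2 : ℝ))}

/-- Quadratic form attached to an integer matrix, over any commutative ring. -/
def quadEval {s : ℕ} {R : Type*} [CommRing R] (M : Matrix (Fin s) (Fin s) ℤ)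
    (x : Fin s → R) : R :=
  ∑ i, ∑ j, (M i j : R) * x i * x j

/-- `e_q(n) = exp(2πin/q)` for an integer `n`. -/
def eqc (q : ℕ) (n : ℤ) : ℂ := e2pi ((n : ℝ) / (q : ℝ))

/-- The exponential sum `D_q(u)`. -/
def Dq (s : ℕ) (M₁ M₂ : Matrix (Fin s) (Fin s) ℤ) (q : ℕ) (u : Fin s → ℤ) : ℂ :=
  ∑ a ∈ residues q, ∑ b ∈ Fintype.piFinset (fun _ : Fin s => Finset.range q),
    eqc q ((a.1 : ℤ) * quadEval M₁ (fun i => (b i : ℤ)) +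
      (a.2 : ℤ) * quadEval M₂ (fun i => (b i : ℤ)) + ∑ i, (b i : ℤ) * u i)

/-- The exponential sum `S_{q,dc}(u)`. -/
def Sq (s : ℕ) (M₁ M₂ : Matrix (Fin s) (Fin s) ℤ) (q d : ℕ) (c : ℤ × ℤ)
    (u : Fin s → ℤ) : ℂ :=
  ∑ a ∈ (residues q).filter
      (fun a => (q : ℤ) ∣ (d : ℤ) * (c.1 * (a.2 : ℤ) - c.2 * (a.1 : ℤ))),
    ∑ b ∈ Fintype.piFinset (fun _ : Fin s => Finset.range q),
      eqc q ((a.1 : ℤ) * quadEval M₁ (fun i => (b i : ℤ)) +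
        (a.2 : ℤ) * quadEval M₂ (fun i => (b i : ℤ)) + ∑ i, (b i : ℤ) * u i)

/-- The pair of quadratic forms given by `M₁, M₂` is nonsingular: at every nonzero
complex common zero the gradients (equivalently `M₁x`, `M₂x`) are linearly independent. -/
def NonsingularPair (s : ℕ) (M₁ M₂ : Matrix (Fin s) (Fin s) ℤ) : Prop :=
  ∀ x : Fin s → ℂ, x ≠ 0 →
    quadEval M₁ x = 0 → quadEval M₂ x = 0 →
    LinearIndependent ℂ
      ![(M₁.map (fun z : ℤ => (z : ℂ))).mulVec x, (M₂.map (fun z : ℤ => (z : ℂ))).mulVec x]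

/-- Euclidean norm on `Fin m → ℝ`. -/
def enorm' {m : ℕ} (v : Fin m → ℝ) : ℝ := Real.sqrt (∑ i, v i ^ 2)

end

/-!
The kernel `h(y, ·)` is an approximate delta mass: for a test function `F` of one variable,
integrating `F` against `h(y, ·)` turns the two sums over `j` defining `h` into sums of `ω(x)/x` and
of `F` over dilated copies of `ℤ`. Poisson summation replaces each sum by an integral, up to an
error of size `y ^ (n - 1)` times the `L¹` norm of an `n`-th derivative. The two integrals cancel,
and what survives is `F 0`, because `∫ ω = 1`.

For `p_{2,r,k,q}` take coordinates along `r` and `r^⊥`, scaled so that the argument of `h` becomes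
the first coordinate and `ω₀(|x| / Q ^ (3/2))` becomes `ω₀(|(l s, t)|)` with `l = Q ^ (1/2) / |r|`;
since `ω₀` is even, this is smooth even at the origin. On each line `t = const` the delta mass
evaluates the integrand at `s = 0`, and the integral over `t` of these values is the Fourier
transform of `ω₀`. The phase has frequency `l² Q (w·r)` along `r`, so `n` derivatives cost a factor
`≪ Y ^ n` with `Y = Q |w·r| + 1`. The total error is `≪ Y ^ n y ^ (n - 1)` with
`Q⁻¹ ≤ y = kq / Q` and `Y y ≤ Q ^ (-δ)`, hence `≪ Q ^ (1 - δ n)`; choose `n` large.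
-/

open scoped FourierTransform

section Poisson

theorem hasCompactSupport_iteratedDeriv {f : ℝ → ℂ} (hf : HasCompactSupport f) (n : ℕ) :
    HasCompactSupport (iteratedDeriv n f) := by
  rw [iteratedDeriv_eq_equiv_comp]
  exact (hf.iteratedFDeriv (𝕜 := ℝ) n).comp_left (by simp)

theorem integrable_iteratedDeriv_of_hasCompactSupport {f : ℝ → ℂ} (hf : ContDiff ℝ (⊤ : ℕ∞) f)
    (hc : HasCompactSupport f) (n : ℕ) : Integrable (iteratedDeriv n f) :=
  (hf.continuous_iteratedDeriv n (by exact_mod_cast le_top)).integrable_of_hasCompactSupport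
    (hasCompactSupport_iteratedDeriv hc n)

theorem pow_mul_norm_fourier_le {f : ℝ → ℂ} {n : ℕ} (hf : ContDiff ℝ n f)
    (hint : ∀ m ≤ n, Integrable (iteratedDeriv m f)) (ξ : ℝ) :
    (2 * π * |ξ|) ^ n * ‖𝓕 f ξ‖ ≤ ∫ x, ‖iteratedDeriv n f x‖ := by
  have h : 𝓕 (iteratedDeriv n f) ξ = (2 * π * Complex.I * ξ) ^ n • 𝓕 f ξ :=
    congrFun (Real.fourier_iteratedDeriv (N := n) hf
      (fun m hm => hint m (by exact_mod_cast hm)) le_rfl) ξ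
  calc (2 * π * |ξ|) ^ n * ‖𝓕 f ξ‖ = ‖𝓕 (iteratedDeriv n f) ξ‖ := by
        rw [h, norm_smul]; simp [abs_of_pos pi_pos]
    _ ≤ ∫ x, ‖iteratedDeriv n f x‖ :=
        VectorFourier.norm_fourierIntegral_le_integral_norm _ _ _ _ _

/-- The constant `∑_{m ≠ 0} (2π|m|)^{-n}` of the Poisson summation error estimates; the term
`m = 0` vanishes because `0⁻¹ = 0`. -/
noncomputable def poissonConst (n : ℕ) : ℝ := ∑' m : ℤ, ((2 * π * |(m : ℝ)|) ^ n)⁻¹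

theorem poissonConst_nonneg (n : ℕ) : 0 ≤ poissonConst n := tsum_nonneg fun _ => by positivity

theorem summable_inv_two_pi_mul_abs_pow {n : ℕ} (hn : 2 ≤ n) :
    Summable fun m : ℤ => ((2 * π * |(m : ℝ)|) ^ n)⁻¹ := by
  refine (((Real.summable_one_div_int_pow.mpr hn).abs).mul_left ((2 * π) ^ n)⁻¹).congr fun m => ?_
  rw [mul_pow _ |(m : ℝ)|, mul_inv, abs_div, abs_one, abs_pow, one_div]

theorem norm_tsum_sub_integral_le {f : ℝ → ℂ} (hf : ContDiff ℝ (⊤ : ℕ∞) f)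
    (hc : HasCompactSupport f) {n : ℕ} (hn : 2 ≤ n) :
    ‖∑' m : ℤ, f m - ∫ x, f x‖ ≤ poissonConst n * ∫ x, ‖iteratedDeriv n f x‖ := by
  set I := ∫ x, ‖iteratedDeriv n f x‖
  have : 0 ≤ I := integral_nonneg fun _ => norm_nonneg _
  have hsum : Summable fun m : ℤ => ((2 * π * |(m : ℝ)|) ^ n)⁻¹ * I :=
    (summable_inv_two_pi_mul_abs_pow hn).mul_right I
  have hle : ∀ m : ℤ, ‖if m = 0 then 0 else 𝓕 f (m : ℝ)‖ ≤
      ((2 * π * |(m : ℝ)|) ^ n)⁻¹ * I := by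
    intro m
    split_ifs with hm
    · rw [norm_zero]; positivity
    · rw [inv_mul_eq_div, le_div_iff₀' (by positivity)]
      exact pow_mul_norm_fourier_le (hf.of_le (by exact_mod_cast le_top))
        (fun j _ => integrable_iteratedDeriv_of_hasCompactSupport hf hc j) m
  have hpoisson : ∑' m : ℤ, f m = ∑' m : ℤ, 𝓕 f (m : ℝ) := by
    have h := SchwartzMap.tsum_eq_tsum_fourier (hc.toSchwartzMap hf) 0
    simp only [SchwartzMap.fourier_coe, zero_add, QuotientAddGroup.mk_zero, fourier_eval_zero,
      mul_one] at h
    exact h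
  have hsummable : Summable fun m : ℤ => 𝓕 f (m : ℝ) :=
    (summable_congr_cofinite (by
      filter_upwards [(Set.finite_singleton (0 : ℤ)).compl_mem_cofinite] with m hm
      exact if_neg hm)).mp (Summable.of_norm_bounded hsum hle)
  have hzero : 𝓕 f ((0 : ℤ) : ℝ) = ∫ x, f x := by simp [Real.fourier_real_eq]
  rw [hpoisson, hsummable.tsum_eq_add_tsum_ite 0, hzero, add_sub_cancel_left, poissonConst,
    ← tsum_mul_right]
  exact tsum_of_norm_bounded hsum.hasSum hle

theorem norm_tsum_mul_sub_integral_le {f : ℝ → ℂ} (hf : ContDiff ℝ (⊤ : ℕ∞) f)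
    (hc : HasCompactSupport f) {n : ℕ} (hn : 2 ≤ n) {y : ℝ} (hy : 0 < y) :
    ‖∑' m : ℤ, f (y * m) - (y : ℂ)⁻¹ * ∫ x, f x‖ ≤
      poissonConst n * y ^ (n - 1) * ∫ x, ‖iteratedDeriv n f x‖ := by
  have hdil : ContDiff ℝ (⊤ : ℕ∞) fun x => f (y * x) := hf.comp (contDiff_const.mul contDiff_id)
  have hdilc : HasCompactSupport fun x => f (y * x) :=
    hc.comp_homeomorph (Homeomorph.mulLeft₀ y hy.ne')
  have h := norm_tsum_sub_integral_le hdil hdilc hn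
  rw [iteratedDeriv_comp_const_smul (hf.of_le (by exact_mod_cast le_top)) y] at h
  simp only [norm_smul, norm_pow, Real.norm_of_nonneg hy.le] at h
  rw [integral_const_mul, Measure.integral_comp_mul_left (fun x => ‖iteratedDeriv n f x‖) y,
    Measure.integral_comp_mul_left f y, abs_of_pos (inv_pos.mpr hy), Complex.real_smul,
    Complex.ofReal_inv, smul_eq_mul] at h
  convert h using 1
  rw [pow_sub₀ y hy.ne' (by lia : 1 ≤ n), pow_one]
  ring

end Poisson

section DeltaMass

variable {ω : ℝ → ℝ} {a b : ℝ}

theorem tsum_int_eq_add_sum_Icc {G : ℤ → ℂ} {J : ℕ+} (hG : ∀ n : ℤ, (J : ℤ) < |n| → G n = 0) :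
    ∑' n : ℤ, G n = G 0 + ∑ j ∈ Icc 1 J, (G j + G (-j)) := by
  have hsummable : Summable G := by
    refine summable_of_ne_finset_zero (s := Icc (-(J : ℤ)) J) fun n hn => hG n ?_
    rwa [Finset.mem_Icc, ← abs_le, not_le] at hn
  have hpos : ∀ j ∉ Icc 1 J, (J : ℤ) < |(j : ℤ)| := fun j hj => by
    simpa using hj
  rw [tsum_int_eq_zero_add_tsum_pnat hsummable, sum_add_distrib, add_assoc,
    tsum_eq_sum (f := fun j : ℕ+ => G j) fun j hj => hG j (hpos j hj),
    tsum_eq_sum (f := fun j : ℕ+ => G (-j)) fun j hj => hG (-j) (by rw [abs_neg]; exact hpos j hj)]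

theorem hFun_eq_sum (ha : 0 < a) (hω : Function.support ω ⊆ Set.Icc a b) {y : ℝ} (hy : 0 < y)
    {J : ℕ+} (hJ : b ≤ y * J) {z : ℝ} (hz : |z| ≤ a * (y * J)) :
    hFun ω y z = ∑ j ∈ Icc 1 J, 1 / (y * j) * (ω (y * j) - ω (|z| / (y * j))) := by
  refine tsum_eq_sum fun j hj => ?_
  have hJj : (J : ℝ) < j := by simpa using hj
  have hyj : y * J < y * j := by gcongr
  have hleft : ω (y * j) = 0 :=
    Function.notMem_support.mp fun h => (hJ.trans_lt hyj).not_ge (hω h).2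
  have hright : ω (|z| / (y * j)) = 0 := by
    refine Function.notMem_support.mp fun h => (hω h).1.not_gt ?_
    rw [div_lt_iff₀ (by positivity)]
    exact hz.trans_lt (by gcongr)
  rw [hleft, hright, sub_zero, mul_zero]

theorem exists_le_mul_pnat {y : ℝ} (hy : 0 < y) (c : ℝ) : ∃ J : ℕ+, c ≤ y * J := by
  obtain ⟨n, hn⟩ := exists_nat_ge (c / y)
  refine ⟨n.succPNat, ?_⟩
  rw [div_le_iff₀' hy] at hn
  exact hn.trans (by gcongr; simp)

theorem continuous_hFun (ha : 0 < a) (hω : Function.support ω ⊆ Set.Icc a b)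
    (hωc : Continuous ω) {y : ℝ} (hy : 0 < y) : Continuous (hFun ω y) := by
  refine continuous_iff_continuousAt.mpr fun x => ?_
  obtain ⟨J, hJ⟩ := exists_le_mul_pnat hy (max b ((|x| + 1) / a))
  have hsum : (fun z => ∑ j ∈ Icc 1 J, 1 / (y * j) * (ω (y * j) - ω (|z| / (y * j))))
      =ᶠ[nhds x] hFun ω y := by
    filter_upwards [continuous_abs.continuousAt.eventually_le_const (lt_add_one |x|)] with z hz
    refine (hFun_eq_sum ha hω hy ((le_max_left _ _).trans hJ) (hz.trans ?_)).symm
    exact (div_le_iff₀' ha).mp ((le_max_right _ _).trans hJ)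
  exact ContinuousAt.congr (by fun_prop) hsum

theorem hasCompactSupport_ofReal (hω : Function.support ω ⊆ Set.Icc a b) :
    HasCompactSupport fun v => (ω v : ℂ) :=
  (HasCompactSupport.of_support_subset_isCompact isCompact_Icc hω).comp_left Complex.ofReal_zero

theorem integral_mul_comp_abs_div {s : ℝ} (hs : 0 < s) (ha : 0 < a)
    (hω : Function.support ω ⊆ Set.Icc a b) (hωc : Continuous ω) {F : ℝ → ℂ}
    (hF : Continuous F) :
    ∫ z, F z * ((1 / s * ω (|z| / s) : ℝ) : ℂ) = ∫ v, (ω v : ℂ) * (F (s * v) + F (-(s * v))) := by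
  have hint : ∀ c : ℝ, Integrable fun v => (ω v : ℂ) * F (c * v) := fun c =>
    Continuous.integrable_of_hasCompactSupport (by fun_prop)
      (hasCompactSupport_ofReal hω).mul_right
  have hfold : ∀ v, (ω |v| : ℂ) * F (s * v) =
      (ω v : ℂ) * F (s * v) + (ω (-v) : ℂ) * F (-s * -v) := by
    have hneg : ∀ v < 0, ω v = 0 := fun v hv =>
      Function.notMem_support.mp fun h => (hv.trans ha).not_ge (hω h).1
    intro v
    rcases lt_trichotomy v 0 with hv | rfl | hv
    · simp [abs_of_neg hv, hneg v hv]
    · have h0 : ω 0 = 0 := Function.notMem_support.mp fun h => ha.not_ge (hω h).1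
      simp [h0]
    · simp [abs_of_pos hv, hneg (-v) (neg_lt_zero.mpr hv)]
  calc ∫ z, F z * ((1 / s * ω (|z| / s) : ℝ) : ℂ)
      = ∫ v, (ω |v| : ℂ) * F (s * v) := by
        have h := Measure.integral_comp_mul_left (fun z => F z * ((1 / s * ω (|z| / s) : ℝ) : ℂ)) s
        rw [abs_of_pos (inv_pos.mpr hs), eq_inv_smul_iff₀ hs.ne', ← integral_smul] at h
        rw [← h]
        congr with v
        have : (s : ℂ) ≠ 0 := by exact_mod_cast hs.ne'
        rw [abs_mul, abs_of_pos hs, mul_div_cancel_left₀ _ hs.ne', Complex.real_smul]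
        push_cast
        field_simp
    _ = (∫ v, (ω v : ℂ) * F (s * v)) + ∫ v, (ω v : ℂ) * F (-s * v) := by
        simp_rw [hfold]
        rw [integral_add (hint s) (hint (-s)).comp_neg]
        congr 1
        exact integral_neg_eq_self (fun v => (ω v : ℂ) * F (-s * v)) volume
    _ = ∫ v, (ω v : ℂ) * (F (s * v) + F (-(s * v))) := by
        rw [← integral_add (hint s) (hint (-s))]
        simp only [mul_add, neg_mul]

theorem mul_tsum_sub_eq_mul_sum (ha : 0 < a) (hω : Function.support ω ⊆ Set.Icc a b)
    {F : ℝ → ℂ} {R : ℝ} (hF : ∀ x, R < |x| → F x = 0) {y : ℝ} (hy : 0 < y) {J : ℕ+}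
    (hJ : R ≤ a * (y * J)) (v : ℝ) :
    (ω v : ℂ) * (∑' n : ℤ, F (y * v * n) - F 0) =
      (ω v : ℂ) * ∑ j ∈ Icc 1 J, (F (y * j * v) + F (-(y * j * v))) := by
  by_cases hv : ω v = 0
  · simp [hv]
  have hav : a ≤ v := (hω hv).1
  have hlarge : ∀ n : ℤ, (J : ℤ) < |n| → F (y * v * n) = 0 := fun n hn => hF _ <| by
    have hn' : (J : ℝ) < |(n : ℝ)| := by exact_mod_cast hn
    calc R ≤ a * (y * J) := hJ
      _ < a * (y * |(n : ℝ)|) := by gcongr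
      _ ≤ v * (y * |(n : ℝ)|) := by gcongr
      _ = |y * v * n| := by
        rw [abs_mul, abs_of_pos (mul_pos hy (ha.trans_le hav))]
        ring
  rw [tsum_int_eq_add_sum_Icc hlarge, Int.cast_zero, mul_zero, add_sub_cancel_left]
  congr 1
  refine sum_congr rfl fun j _ => ?_
  congr 2 <;> push_cast <;> ring

/-- The function `x ↦ ω x / x`, whose values at the points `y * j` are the first terms of the
sum `hFun`. -/
noncomputable def divId (ω : ℝ → ℝ) (x : ℝ) : ℂ := ((ω x / x : ℝ) : ℂ)

theorem support_divId_subset (hω : Function.support ω ⊆ Set.Icc a b) :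
    Function.support (divId ω) ⊆ Set.Icc a b := fun x hx => hω fun h => hx (by simp [divId, h])

theorem contDiff_divId (ha : 0 < a) (hω : Function.support ω ⊆ Set.Icc a b) {n : ℕ∞}
    (hωs : ContDiff ℝ n ω) : ContDiff ℝ n (divId ω) := by
  refine Complex.ofRealCLM.contDiff.comp (contDiff_iff_contDiffAt.mpr fun x => ?_)
  rcases eq_or_ne x 0 with rfl | hx
  · refine (contDiffAt_const (c := (0 : ℝ))).congr_of_eventuallyEq ?_
    filter_upwards [Iio_mem_nhds ha] with z hz
    change ω z / z = 0
    rw [Function.notMem_support.mp fun h => (hω h).1.not_gt hz, zero_div]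
  · exact hωs.contDiffAt.div contDiffAt_id hx

theorem tsum_divId_eq_sum (ha : 0 < a) (hω : Function.support ω ⊆ Set.Icc a b) {y : ℝ}
    (hy : 0 < y) {J : ℕ+} (hJ : b ≤ y * J) :
    ∑' n : ℤ, divId ω (y * n) = ∑ j ∈ Icc 1 J, divId ω (y * j) := by
  have hnonpos : ∀ n : ℤ, n ≤ 0 → divId ω (y * n) = 0 := fun n hn =>
    Function.notMem_support.mp fun h =>
      ((mul_nonpos_of_nonneg_of_nonpos hy.le (by exact_mod_cast hn)).trans_lt ha).not_ge
        (support_divId_subset hω h).1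
  have hlarge : ∀ n : ℤ, (J : ℤ) < |n| → divId ω (y * n) = 0 := fun n hn => by
    rcases le_or_gt n 0 with h0 | h0
    · exact hnonpos n h0
    · refine Function.notMem_support.mp fun h => (hJ.trans_lt ?_).not_ge
        (support_divId_subset hω h).2
      have hn' : (J : ℝ) < n := by rw [abs_of_pos h0] at hn; exact_mod_cast hn
      gcongr
  rw [tsum_int_eq_add_sum_Icc hlarge, hnonpos 0 le_rfl, zero_add]
  refine sum_congr rfl fun j _ => ?_
  rw [hnonpos (-j) (by simp), add_zero, Int.cast_natCast]

theorem mul_hFun_eq_sub_sum (ha : 0 < a) (hω : Function.support ω ⊆ Set.Icc a b) {F : ℝ → ℂ}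
    {R : ℝ} (hF : ∀ x, R < |x| → F x = 0) {y : ℝ} (hy : 0 < y) {J : ℕ+} (hJb : b ≤ y * J)
    (hJR : R ≤ a * (y * J)) (z : ℝ) :
    F z * hFun ω y z = (∑' n : ℤ, divId ω (y * n)) * F z -
      ∑ j ∈ Icc 1 J, F z * ((1 / (y * j) * ω (|z| / (y * j)) : ℝ) : ℂ) := by
  by_cases hz : R < |z|
  · simp [hF z hz]
  rw [hFun_eq_sum ha hω hy hJb ((not_lt.mp hz).trans hJR), tsum_divId_eq_sum ha hω hy hJb,
    sum_mul, ← sum_sub_distrib, Complex.ofReal_sum, mul_sum]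
  refine sum_congr rfl fun j _ => ?_
  rw [divId]
  push_cast
  ring

theorem exists_forall_lt_norm_eq_zero {V E : Type*} [SeminormedAddCommGroup V] [Zero E]
    {F : V → E} (hF : HasCompactSupport F) : ∃ R, 0 < R ∧ ∀ x, R < ‖x‖ → F x = 0 := by
  obtain ⟨R, hR0, hR⟩ := hF.isCompact.isBounded.exists_pos_norm_le
  exact ⟨R, hR0, fun x hx => image_eq_zero_of_notMem_tsupport fun h => (hR x h).not_gt hx⟩

theorem integrable_mul_tsum_sub (ha : 0 < a) (hω : Function.support ω ⊆ Set.Icc a b)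
    (hωc : Continuous ω) {F : ℝ → ℂ} (hF : Continuous F) (hFc : HasCompactSupport F) {y : ℝ}
    (hy : 0 < y) :
    Integrable fun v => (ω v : ℂ) * (∑' n : ℤ, F (y * v * n) - F 0) := by
  obtain ⟨R, -, hR⟩ := exists_forall_lt_norm_eq_zero hFc
  obtain ⟨J, hJ⟩ := exists_le_mul_pnat hy (R / a)
  rw [funext (mul_tsum_sub_eq_mul_sum ha hω hR hy ((div_le_iff₀' ha).mp hJ))]
  exact Continuous.integrable_of_hasCompactSupport (by fun_prop)
    (hasCompactSupport_ofReal hω).mul_right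

theorem integral_mul_hFun (ha : 0 < a) (hω : Function.support ω ⊆ Set.Icc a b)
    (hωc : Continuous ω) {F : ℝ → ℂ} (hF : Continuous F) (hFc : HasCompactSupport F) {y : ℝ}
    (hy : 0 < y) :
    ∫ z, F z * hFun ω y z = (∑' n : ℤ, divId ω (y * n)) * (∫ z, F z) -
      ∫ v, (ω v : ℂ) * (∑' n : ℤ, F (y * v * n) - F 0) := by
  obtain ⟨R, -, hR⟩ := exists_forall_lt_norm_eq_zero hFc
  obtain ⟨J, hJ⟩ := exists_le_mul_pnat hy (max b (R / a))
  have hJb : b ≤ y * J := (le_max_left _ _).trans hJ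
  have hJR : R ≤ a * (y * J) := (div_le_iff₀' ha).mp ((le_max_right _ _).trans hJ)
  have hint : ∀ j : ℕ+, Integrable fun z =>
      F z * ((1 / (y * j) * ω (|z| / (y * j)) : ℝ) : ℂ) := fun j =>
    Continuous.integrable_of_hasCompactSupport (by fun_prop) hFc.mul_right
  have hint' : ∀ j : ℕ+, Integrable fun v =>
      (ω v : ℂ) * (F (y * j * v) + F (-(y * j * v))) := fun j =>
    Continuous.integrable_of_hasCompactSupport (by fun_prop)
      (hasCompactSupport_ofReal hω).mul_right
  simp_rw [mul_hFun_eq_sub_sum ha hω hR hy hJb hJR, mul_tsum_sub_eq_mul_sum ha hω hR hy hJR,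
    mul_sum]
  rw [integral_sub ((hF.integrable_of_hasCompactSupport hFc).const_mul _)
    (integrable_finsetSum _ fun j _ => hint j), integral_const_mul,
    integral_finsetSum _ fun j _ => hint j, integral_finsetSum _ fun j _ => hint' j]
  congr 1
  exact sum_congr rfl fun j _ => integral_mul_comp_abs_div (by positivity) ha hω hωc hF

-- Both parentheses on the right are Poisson summation errors. The main terms subtracted in them
-- cancel each other, and `F 0` comes from the `n = 0` terms, weighted by `∫ ω = 1`.
theorem integral_mul_hFun_sub (ha : 0 < a) (hω : Function.support ω ⊆ Set.Icc a b)
    (hωc : Continuous ω) (hω1 : ∫ x, ω x = 1) {F : ℝ → ℂ} (hF : Continuous F)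
    (hFc : HasCompactSupport F) {y : ℝ} (hy : 0 < y) :
    (∫ z, F z * hFun ω y z) - F 0 =
      (∑' m : ℤ, divId ω (y * m) - (y : ℂ)⁻¹ * ∫ x, divId ω x) * (∫ z, F z) -
        ∫ v, (ω v : ℂ) * (∑' m : ℤ, F (y * v * m) - ((y * v : ℝ) : ℂ)⁻¹ * ∫ z, F z) := by
  have hint₁ : Integrable fun v => divId ω v * ((y : ℂ)⁻¹ * ∫ z, F z) :=
    ((contDiff_divId (n := 0) ha hω (by simpa using hωc)).continuous.integrable_of_hasCompactSupport
      (.of_support_subset_isCompact isCompact_Icc (support_divId_subset hω))).mul_const _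
  have hint₂ : Integrable fun v => (ω v : ℂ) * F 0 :=
    (Continuous.integrable_of_hasCompactSupport (by fun_prop)
      (hasCompactSupport_ofReal hω)).mul_const _
  have hpoint : ∀ v, (ω v : ℂ) * (∑' m : ℤ, F (y * v * m) - ((y * v : ℝ) : ℂ)⁻¹ * ∫ z, F z) =
      (ω v : ℂ) * (∑' m : ℤ, F (y * v * m) - F 0) -
        (divId ω v * ((y : ℂ)⁻¹ * ∫ z, F z) - (ω v : ℂ) * F 0) := fun v => by
    rw [divId]
    push_cast
    rw [mul_inv]
    ring
  have hdiff : ∫ v, (divId ω v * ((y : ℂ)⁻¹ * ∫ z, F z) - (ω v : ℂ) * F 0) =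
      (∫ v, divId ω v) * ((y : ℂ)⁻¹ * ∫ z, F z) - F 0 := by
    rw [integral_sub hint₁ hint₂, integral_mul_const, integral_mul_const,
      integral_complex_ofReal, hω1, Complex.ofReal_one, one_mul]
  simp_rw [hpoint]
  rw [integral_mul_hFun ha hω hωc hF hFc hy,
    integral_sub (integrable_mul_tsum_sub ha hω hωc hF hFc hy)
      (g := fun v => divId ω v * ((y : ℂ)⁻¹ * ∫ z, F z) - (ω v : ℂ) * F 0) (hint₁.sub hint₂), hdiff]
  ring

theorem norm_integral_mul_hFun_sub_le (ha : 0 < a) (hω : Function.support ω ⊆ Set.Icc a b)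
    (hωs : ContDiff ℝ (⊤ : ℕ∞) ω) (hω1 : ∫ x, ω x = 1) {F : ℝ → ℂ}
    (hF : ContDiff ℝ (⊤ : ℕ∞) F) (hFc : HasCompactSupport F) {n : ℕ} (hn : 2 ≤ n) {y : ℝ}
    (hy : 0 < y) :
    ‖(∫ z, F z * hFun ω y z) - F 0‖ ≤ poissonConst n * y ^ (n - 1) *
      ((∫ x, ‖iteratedDeriv n (divId ω) x‖) * (∫ x, ‖F x‖) +
        (∫ v, |ω v| * |v| ^ (n - 1)) * ∫ x, ‖iteratedDeriv n F x‖) := by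
  have hωc := hωs.continuous
  have hdiv : ‖∑' m : ℤ, divId ω (y * m) - (y : ℂ)⁻¹ * ∫ x, divId ω x‖ ≤
      poissonConst n * y ^ (n - 1) * ∫ x, ‖iteratedDeriv n (divId ω) x‖ :=
    norm_tsum_mul_sub_integral_le (contDiff_divId ha hω hωs)
      (.of_support_subset_isCompact isCompact_Icc (support_divId_subset hω)) hn hy
  have hpoint : ∀ v, ‖(ω v : ℂ) * (∑' m : ℤ, F (y * v * m) - ((y * v : ℝ) : ℂ)⁻¹ * ∫ z, F z)‖ ≤
      |ω v| * |v| ^ (n - 1) *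
        (poissonConst n * y ^ (n - 1) * ∫ x, ‖iteratedDeriv n F x‖) := fun v => by
    by_cases hv : ω v = 0
    · simp [hv]
    have hv0 : 0 < v := ha.trans_le (hω hv).1
    have h := norm_tsum_mul_sub_integral_le hF hFc hn (mul_pos hy hv0)
    rw [norm_mul, Complex.norm_real, norm_eq_abs, mul_assoc, abs_of_pos hv0]
    gcongr
    exact h.trans_eq (by rw [mul_pow]; ring)
  have hint : Integrable fun v => |ω v| * |v| ^ (n - 1) :=
    Continuous.integrable_of_hasCompactSupport (by fun_prop) (HasCompactSupport.mul_right
      ((HasCompactSupport.of_support_subset_isCompact isCompact_Icc hω).comp_left abs_zero))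
  have havg := norm_integral_le_of_norm_le (hint.mul_const _) (.of_forall hpoint)
  rw [integral_mul_const] at havg
  rw [integral_mul_hFun_sub ha hω hωc hω1 hF.continuous hFc hy]
  refine (norm_sub_le _ _).trans ?_
  rw [norm_mul]
  calc _ ≤ (poissonConst n * y ^ (n - 1) * ∫ x, ‖iteratedDeriv n (divId ω) x‖) * (∫ x, ‖F x‖) +
        (∫ v, |ω v| * |v| ^ (n - 1)) *
          (poissonConst n * y ^ (n - 1) * ∫ x, ‖iteratedDeriv n F x‖) := by
        gcongr
        · exact (norm_nonneg _).trans hdiv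
        · exact norm_integral_le_integral_norm F
    _ = _ := by ring

end DeltaMass

section Radial

variable {E : Type*} [NormedAddCommGroup E] [NormedSpace ℝ E]

theorem hasDerivAt_integral_pow_smul_comp_mul {f : ℝ → E} (hf : ContDiff ℝ 1 f) (k : ℕ) (x : ℝ) :
    HasDerivAt (fun x => ∫ u in (0 : ℝ)..1, u ^ k • f (x * u))
      (∫ u in (0 : ℝ)..1, u ^ (k + 1) • deriv f (x * u)) x := by
  have hfc : Continuous f := hf.continuous
  have hfc' : Continuous (deriv f) := hf.continuous_deriv_one
  obtain ⟨C, hC⟩ := (isCompact_Icc (a := -(|x| + 1)) (b := |x| + 1)).exists_bound_of_continuousOn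
    hfc'.continuousOn
  refine (intervalIntegral.hasDerivAt_integral_of_dominated_loc_of_deriv_le
    (F := fun x u => u ^ k • f (x * u)) (F' := fun x u => u ^ (k + 1) • deriv f (x * u))
    (bound := fun _ => C) (Metric.ball_mem_nhds x one_pos)
    (.of_forall fun z => (by fun_prop : Continuous _).aestronglyMeasurable)
    ((by fun_prop : Continuous _).intervalIntegrable _ _)
    (by fun_prop : Continuous _).aestronglyMeasurable
    (.of_forall fun u hu z hz => ?_) intervalIntegrable_const
    (.of_forall fun u _ z _ => ?_)).2
  · rw [Set.uIoc_of_le zero_le_one] at hu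
    have hz' : |z| ≤ |x| + 1 := by
      rw [Metric.mem_ball, Real.dist_eq] at hz
      linarith [abs_sub_abs_le_abs_sub z x]
    have hzu : |z * u| ≤ |x| + 1 := by
      rw [abs_mul, abs_of_pos hu.1]
      exact (mul_le_of_le_one_right (abs_nonneg _) hu.2).trans hz'
    rw [norm_smul, norm_pow, Real.norm_of_nonneg hu.1.le]
    exact (mul_le_of_le_one_left (norm_nonneg _) (pow_le_one₀ hu.1.le hu.2)).trans
      (hC _ (abs_le.mp hzu))
  · have h := ((hf.differentiable one_ne_zero _).hasDerivAt.scomp z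
      (hasDerivAt_mul_const (x := z) u)).const_smul (u ^ k)
    exact h.congr_deriv (by rw [smul_smul, pow_succ])

theorem contDiff_integral_pow_smul_comp_mul (n : ℕ) {f : ℝ → E} (hf : ContDiff ℝ (⊤ : ℕ∞) f)
    (k : ℕ) : ContDiff ℝ n fun x => ∫ u in (0 : ℝ)..1, u ^ k • f (x * u) := by
  induction n generalizing f k with
  | zero =>
    have := hf.continuous
    rw [Nat.cast_zero, contDiff_zero]
    exact intervalIntegral.continuous_parametric_intervalIntegral_of_continuous' (by fun_prop) 0 1
  | succ n ih =>
    have hd := hasDerivAt_integral_pow_smul_comp_mul (hf.of_le (by exact_mod_cast le_top)) k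
    push_cast
    rw [contDiff_succ_iff_deriv]
    refine ⟨fun x => (hd x).differentiableAt, by simp, ?_⟩
    rw [funext fun x => (hd x).deriv]
    exact ih (contDiff_infty_iff_deriv.mp hf).2 (k + 1)

theorem eq_add_smul_integral_deriv [CompleteSpace E] {f : ℝ → E} (hf : ContDiff ℝ 1 f) (x : ℝ) :
    f x = f 0 + x • ∫ u in (0 : ℝ)..1, deriv f (x * u) := by
  have : Continuous (deriv f) := hf.continuous_deriv_one
  have h := intervalIntegral.integral_eq_sub_of_hasDerivAt (a := 0) (b := 1)
    (fun u _ => (hf.differentiable one_ne_zero _).hasDerivAt.scomp u (hasDerivAt_const_mul x))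
    ((by fun_prop : Continuous fun u => x • deriv f (x * u)).intervalIntegrable _ _)
  rw [intervalIntegral.integral_smul] at h
  simp [h]

theorem deriv_neg_of_even {f : ℝ → E} (hf : ∀ x, f (-x) = f x) (x : ℝ) :
    deriv f (-x) = -deriv f x := by
  have h := deriv_comp_neg f x
  rw [funext hf] at h
  rw [h, neg_neg]

theorem deriv_neg_of_odd {f : ℝ → E} (hf : ∀ x, f (-x) = -f x) (x : ℝ) :
    deriv f (-x) = deriv f x := by
  have h := deriv_comp_neg f x
  rw [funext hf, deriv.fun_neg] at h
  exact (neg_injective h).symm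

theorem exists_contDiff_even_deriv_eq_smul [CompleteSpace E] {f : ℝ → E}
    (hf : ContDiff ℝ (⊤ : ℕ∞) f) (heven : ∀ x, f (-x) = f x) :
    ∃ g : ℝ → E, ContDiff ℝ (⊤ : ℕ∞) g ∧ (∀ x, g (-x) = g x) ∧ ∀ x, deriv f x = x • g x := by
  have hf' : ContDiff ℝ (⊤ : ℕ∞) (deriv f) := (contDiff_infty_iff_deriv.mp hf).2
  have hodd := deriv_neg_of_even heven
  refine ⟨fun x => ∫ u in (0 : ℝ)..1, deriv (deriv f) (x * u),
    contDiff_infty.mpr fun n => ?_, fun x => ?_, fun x => ?_⟩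
  · simpa using contDiff_integral_pow_smul_comp_mul n (contDiff_infty_iff_deriv.mp hf').2 0
  · simp only [neg_mul, deriv_neg_of_odd hodd]
  · have hzero : deriv f 0 = 0 := by
      have : IsAddTorsionFree E := .of_isTorsionFree ℝ E
      rw [← self_eq_neg, ← hodd, neg_zero]
    rw [eq_add_smul_integral_deriv (hf'.of_le (by exact_mod_cast le_top)) x, hzero, zero_add]

theorem hasFDerivAt_comp_norm {V : Type*} [NormedAddCommGroup V] [InnerProductSpace ℝ V]
    {f g : ℝ → ℝ} (hf : Differentiable ℝ f) (hg : ∀ x, deriv f x = x * g x) (v : V) :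
    HasFDerivAt (fun v => f ‖v‖) (g ‖v‖ • innerSL ℝ v) v := by
  rcases eq_or_ne v 0 with rfl | hv
  · have h : HasDerivAt f 0 ‖(0 : V)‖ := by
      simpa [hg] using (hf ‖(0 : V)‖).hasDerivAt
    have hlittle := (hasDerivAt_iff_isLittleO.mp h).comp_tendsto
      (continuous_norm.tendsto (0 : V))
    rw [map_zero, smul_zero, hasFDerivAt_iff_isLittleO]
    refine .of_norm_right ?_
    simpa [Function.comp_def] using hlittle
  · have hnorm := (hasStrictFDerivAt_norm_sq v).hasFDerivAt.sqrt (by positivity)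
    simp only [Real.sqrt_sq (norm_nonneg _)] at hnorm
    refine ((hf ‖v‖).hasDerivAt.comp_hasFDerivAt v hnorm).congr_fderiv ?_
    rw [hg]
    ext z
    simp only [_root_.smul_apply, smul_eq_mul, nsmul_eq_mul, Nat.cast_ofNat]
    field_simp

-- The gradient of `f ‖v‖` is `g ‖v‖ • v`, where `g x = f' x / x` is again smooth and even, so the
-- induction on the order of differentiability closes up.
theorem contDiff_comp_norm_of_even {V : Type*} [NormedAddCommGroup V] [InnerProductSpace ℝ V]
    {f : ℝ → ℝ} (hf : ContDiff ℝ (⊤ : ℕ∞) f) (heven : ∀ x, f (-x) = f x) :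
    ContDiff ℝ (⊤ : ℕ∞) fun v : V => f ‖v‖ := by
  refine contDiff_infty.mpr fun n => ?_
  induction n generalizing f with
  | zero =>
    rw [Nat.cast_zero, contDiff_zero]
    exact hf.continuous.comp continuous_norm
  | succ n ih =>
    obtain ⟨g, hgs, hge, hg⟩ := exists_contDiff_even_deriv_eq_smul hf heven
    push_cast
    exact contDiff_succ_iff_hasFDerivAt.mpr ⟨fun v => g ‖v‖ • innerSL ℝ v,
      (ih hgs hge).smul (innerSL ℝ).contDiff,
      hasFDerivAt_comp_norm (hf.differentiable (by simp)) hg⟩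

end Radial

section PlaneWave

theorem norm_e2pi (x : ℝ) : ‖e2pi x‖ = 1 := by
  have h : (2 * π * Complex.I * x : ℂ) = (2 * π * x : ℝ) * Complex.I := by push_cast; ring
  rw [e2pi, h, Complex.norm_exp_ofReal_mul_I]

theorem e2pi_add (x y : ℝ) : e2pi (x + y) = e2pi x * e2pi y := by
  simp only [e2pi, ← Complex.exp_add]
  push_cast
  ring_nf

theorem contDiff_e2pi {n : WithTop ℕ∞} : ContDiff ℝ n e2pi :=
  (contDiff_const.mul Complex.ofRealCLM.contDiff).cexp

theorem hasDerivAt_e2pi_mul (c x : ℝ) :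
    HasDerivAt (fun x => e2pi (c * x)) (2 * π * Complex.I * c * e2pi (c * x)) x := by
  have h := (((hasDerivAt_const_mul c).ofReal_comp (z := x)).const_mul (2 * π * Complex.I)).cexp
  exact HasDerivAt.congr_deriv (f := fun x => e2pi (c * x)) h (mul_comm _ _)

theorem iteratedDeriv_e2pi_mul (n : ℕ) (c : ℝ) :
    iteratedDeriv n (fun x => e2pi (c * x)) =
      fun x => (2 * π * Complex.I * c) ^ n * e2pi (c * x) := by
  induction n with
  | zero => simp
  | succ n ih =>
    rw [iteratedDeriv_succ, ih]
    funext x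
    rw [((hasDerivAt_e2pi_mul c x).const_mul _).deriv]
    ring

theorem norm_iteratedDeriv_e2pi_mul (n : ℕ) (c x : ℝ) :
    ‖iteratedDeriv n (fun x => e2pi (c * x)) x‖ = (2 * π * |c|) ^ n := by
  simp [iteratedDeriv_e2pi_mul, norm_e2pi, abs_of_pos pi_pos]

variable {V : Type*} [NormedAddCommGroup V] [NormedSpace ℝ V]

theorem exists_norm_iteratedDeriv_comp_line_le {E : Type*} [NormedAddCommGroup E]
    [NormedSpace ℝ E] {Φ : V → E} (hΦ : ContDiff ℝ (⊤ : ℕ∞) Φ) (hΦc : HasCompactSupport Φ)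
    (n : ℕ) : ∃ C, 0 ≤ C ∧ ∀ (a v : V) (z : ℝ),
      ‖iteratedDeriv n (fun z : ℝ => Φ (a + z • v)) z‖ ≤ C * ‖v‖ ^ n := by
  obtain ⟨C, hC⟩ := (hΦc.iteratedFDeriv (𝕜 := ℝ) n).exists_bound_of_continuous
    (hΦ.continuous_iteratedFDeriv (m := n) (by exact_mod_cast le_top))
  refine ⟨C, (norm_nonneg _).trans (hC 0), fun a v z => ?_⟩
  have hline : iteratedFDeriv ℝ n (fun z : ℝ => Φ (a + z • v)) z =
      (iteratedFDeriv ℝ n Φ (a + z • v)).compContinuousLinearMap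
        fun _ => ContinuousLinearMap.toSpanSingleton ℝ v := by
    rw [← iteratedFDeriv_comp_add_left]
    exact (ContinuousLinearMap.toSpanSingleton ℝ v).iteratedFDeriv_comp_right
      (f := fun x => Φ (a + x)) (by fun_prop) z (i := n) (by exact_mod_cast le_top)
  rw [← norm_iteratedFDeriv_eq_norm_iteratedDeriv, hline]
  refine (ContinuousMultilinearMap.norm_compContinuousLinearMap_le _ _).trans ?_
  simpa using mul_le_mul_of_nonneg_right (hC (a + z • v)) (by positivity)

theorem exists_norm_iteratedDeriv_comp_line_mul_e2pi_le {Φ : V → ℂ}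
    (hΦ : ContDiff ℝ (⊤ : ℕ∞) Φ) (hΦc : HasCompactSupport Φ) (n : ℕ) :
    ∃ C, 0 ≤ C ∧ ∀ (a v : V) (u z : ℝ),
      ‖iteratedDeriv n (fun z : ℝ => Φ (a + z • v) * e2pi (u * z)) z‖ ≤
        C * (‖v‖ + 2 * π * |u|) ^ n := by
  choose C hC hle using exists_norm_iteratedDeriv_comp_line_le hΦ hΦc
  refine ⟨∑ i ∈ range (n + 1), C i, sum_nonneg fun i _ => hC i, fun a v u z => ?_⟩
  have hline : ContDiff ℝ (⊤ : ℕ∞) fun z : ℝ => Φ (a + z • v) := by fun_prop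
  have hwave : ContDiff ℝ (⊤ : ℕ∞) fun z => e2pi (u * z) :=
    contDiff_e2pi.comp (contDiff_const.mul contDiff_id)
  have hleibniz := norm_iteratedFDeriv_mul_le hline hwave z (n := n) (by exact_mod_cast le_top)
  simp only [norm_iteratedFDeriv_eq_norm_iteratedDeriv, norm_iteratedDeriv_e2pi_mul] at hleibniz
  rw [add_pow, mul_sum]
  refine hleibniz.trans (sum_le_sum fun i hi => ?_)
  have hCi : C i ≤ ∑ i ∈ range (n + 1), C i := single_le_sum (fun i _ => hC i) hi
  calc _ ≤ n.choose i * ((∑ i ∈ range (n + 1), C i) * ‖v‖ ^ i) * (2 * π * |u|) ^ (n - i) := by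
        gcongr
        exact (hle i a v z).trans (by gcongr)
    _ = _ := by ring

end PlaneWave

section PlaneIntegral

/-- The horizontal slice at height `t` of a function on the plane, dilated by `l` and modulated by
the frequency `u`: the one-variable functions against which `h(y, ·)` is integrated. -/
noncomputable def modulatedSlice (Φ : ℝ × ℝ → ℂ) (l u t z : ℝ) : ℂ :=
  Φ (l * z, t) * e2pi (u * z)

variable {Φ : ℝ × ℝ → ℂ}

theorem modulatedSlice_zero (l u t : ℝ) : modulatedSlice Φ l u t 0 = Φ (0, t) := by
  simp [modulatedSlice, e2pi]

theorem contDiff_modulatedSlice (hΦ : ContDiff ℝ (⊤ : ℕ∞) Φ) (l u t : ℝ) :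
    ContDiff ℝ (⊤ : ℕ∞) (modulatedSlice Φ l u t) :=
  (hΦ.comp (by fun_prop)).mul (contDiff_e2pi.comp (by fun_prop))

theorem tsupport_modulatedSlice_subset {R : ℝ} (hR : ∀ p, R < ‖p‖ → Φ p = 0) {l : ℝ} (hl : 0 < l)
    (u t : ℝ) : tsupport (modulatedSlice Φ l u t) ⊆ Set.Icc (-(R / l)) (R / l) := by
  refine closure_minimal (fun z hz => ?_) isClosed_Icc
  contrapose! hz
  have hzR : R < |l * z| := by
    rwa [Set.mem_Icc, ← abs_le, not_le, div_lt_iff₀' hl, ← abs_of_pos hl, ← abs_mul] at hz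
  simp [modulatedSlice, hR (l * z, t) (hzR.trans_le (norm_fst_le (l * z, t)))]

theorem hasCompactSupport_modulatedSlice (hΦc : HasCompactSupport Φ) {l : ℝ} (hl : 0 < l)
    (u t : ℝ) : HasCompactSupport (modulatedSlice Φ l u t) := by
  obtain ⟨R, -, hR⟩ := exists_forall_lt_norm_eq_zero hΦc
  exact isCompact_Icc.of_isClosed_subset (isClosed_tsupport _)
    (tsupport_modulatedSlice_subset hR hl u t)

theorem exists_integral_norm_iteratedDeriv_modulatedSlice_le (hΦ : ContDiff ℝ (⊤ : ℕ∞) Φ)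
    (hΦc : HasCompactSupport Φ) (n : ℕ) : ∃ C, 0 ≤ C ∧ ∀ l u t, 0 < l →
      ∫ z, ‖iteratedDeriv n (modulatedSlice Φ l u t) z‖ ≤ C * l⁻¹ * (l + 2 * π * |u|) ^ n := by
  obtain ⟨R, hR0, hR⟩ := exists_forall_lt_norm_eq_zero hΦc
  obtain ⟨C, hC0, hC⟩ := exists_norm_iteratedDeriv_comp_line_mul_e2pi_le hΦ hΦc n
  refine ⟨2 * R * C, by positivity, fun l u t hl => ?_⟩
  have hsupp : ∀ z ∉ Set.Icc (-(R / l)) (R / l),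
      ‖iteratedDeriv n (modulatedSlice Φ l u t) z‖ = 0 := fun z hz => by
    rw [← norm_iteratedFDeriv_eq_norm_iteratedDeriv, norm_eq_zero]
    by_contra h
    exact hz (tsupport_modulatedSlice_subset hR hl u t (support_iteratedFDeriv_subset n h))
  have hpoint : ∀ z, ‖iteratedDeriv n (modulatedSlice Φ l u t) z‖ ≤ C * (l + 2 * π * |u|) ^ n := by
    intro z
    have hline : modulatedSlice Φ l u t = fun z : ℝ =>
        Φ ((0, t) + z • ((l, 0) : ℝ × ℝ)) * e2pi (u * z) := by
      funext z
      simp [modulatedSlice, mul_comm]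
    have hnorm : ‖((l, 0) : ℝ × ℝ)‖ = l := by simp [Prod.norm_def, hl.le, abs_of_pos hl]
    rw [hline]
    exact (hC _ _ u z).trans_eq (by rw [hnorm])
  rw [← setIntegral_eq_integral_of_forall_compl_eq_zero hsupp]
  refine (le_norm_self _).trans ((norm_setIntegral_le_of_norm_le_const (by simp)
    fun z _ => (norm_norm _).trans_le (hpoint z)).trans_eq ?_)
  rw [Real.volume_real_Icc_of_le (by linarith [div_pos hR0 hl])]
  ring

variable {ω : ℝ → ℝ} {a b : ℝ}

theorem exists_norm_integral_modulatedSlice_mul_hFun_sub_le (ha : 0 < a)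
    (hω : Function.support ω ⊆ Set.Icc a b) (hωs : ContDiff ℝ (⊤ : ℕ∞) ω) (hω1 : ∫ x, ω x = 1)
    (hΦ : ContDiff ℝ (⊤ : ℕ∞) Φ) (hΦc : HasCompactSupport Φ) {n : ℕ} (hn : 2 ≤ n) :
    ∃ C, 0 ≤ C ∧ ∀ l u t y, 0 < l → 0 < y →
      ‖(∫ z, modulatedSlice Φ l u t z * hFun ω y z) - Φ (0, t)‖ ≤
        C * l⁻¹ * (1 + (l + 2 * π * |u|) ^ n) * y ^ (n - 1) := by
  obtain ⟨C₀, hC₀, hle₀⟩ := exists_integral_norm_iteratedDeriv_modulatedSlice_le hΦ hΦc 0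
  obtain ⟨C₁, hC₁, hle₁⟩ := exists_integral_norm_iteratedDeriv_modulatedSlice_le hΦ hΦc n
  have hP := poissonConst_nonneg n
  set A := ∫ x, ‖iteratedDeriv n (divId ω) x‖
  set B := ∫ v, |ω v| * |v| ^ (n - 1)
  have : 0 ≤ A := integral_nonneg fun _ => norm_nonneg _
  have : 0 ≤ B := integral_nonneg fun _ => by positivity
  refine ⟨poissonConst n * (A * C₀ + B * C₁), by positivity, fun l u t y hl hy => ?_⟩
  have h := norm_integral_mul_hFun_sub_le ha hω hωs hω1 (contDiff_modulatedSlice hΦ l u t)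
    (hasCompactSupport_modulatedSlice hΦc hl u t) hn hy
  rw [modulatedSlice_zero] at h
  have h₀ : ∫ z, ‖modulatedSlice Φ l u t z‖ ≤ C₀ * l⁻¹ := by simpa using hle₀ l u t hl
  have h₁ := hle₁ l u t hl
  set X := (l + 2 * π * |u|) ^ n
  have hX : 0 ≤ X := by positivity
  calc _ ≤ poissonConst n * y ^ (n - 1) * (A * (C₀ * l⁻¹) + B * (C₁ * l⁻¹ * X)) :=
        h.trans (by gcongr)
    _ ≤ poissonConst n * y ^ (n - 1) *
        (A * (C₀ * l⁻¹) * (1 + X) + B * (C₁ * l⁻¹) * (1 + X)) := by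
        gcongr ?_ * (?_ + ?_)
        · exact le_mul_of_one_le_right (by positivity) (by linarith)
        · rw [← mul_assoc]
          gcongr
          linarith
    _ = _ := by ring

theorem integrable_mul_hFun_mul_e2pi (ha : 0 < a) (hω : Function.support ω ⊆ Set.Icc a b)
    (hωc : Continuous ω) (hΦ : Continuous Φ) (hΦc : HasCompactSupport Φ) {l y : ℝ} (hl : 0 < l)
    (hy : 0 < y) (u v : ℝ) :
    Integrable fun p : ℝ × ℝ =>
      Φ (l * p.1, p.2) * hFun ω y p.1 * (e2pi (u * p.1) * e2pi (v * p.2)) := by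
  have := continuous_hFun ha hω hωc hy
  have : Continuous e2pi := contDiff_e2pi (n := 0).continuous
  have hdil : HasCompactSupport fun p : ℝ × ℝ => Φ (l * p.1, p.2) :=
    hΦc.comp_homeomorph ((Homeomorph.mulLeft₀ l hl.ne').prodCongr (Homeomorph.refl ℝ))
  exact Continuous.integrable_of_hasCompactSupport (by fun_prop) hdil.mul_right.mul_right

theorem integral_slice_eq_integral_modulatedSlice_mul (Φ : ℝ × ℝ → ℂ) (h : ℝ → ℝ)
    (l u v t : ℝ) :
    ∫ z, Φ (l * z, t) * h z * (e2pi (u * z) * e2pi (v * t)) =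
      (∫ z, modulatedSlice Φ l u t z * h z) * e2pi (v * t) := by
  rw [← integral_mul_const]
  congr with z
  rw [modulatedSlice]
  ring

theorem exists_norm_integral_mul_hFun_sub_integral_le (ha : 0 < a)
    (hω : Function.support ω ⊆ Set.Icc a b) (hωs : ContDiff ℝ (⊤ : ℕ∞) ω) (hω1 : ∫ x, ω x = 1)
    (hΦ : ContDiff ℝ (⊤ : ℕ∞) Φ) (hΦc : HasCompactSupport Φ) {n : ℕ} (hn : 2 ≤ n) :
    ∃ C, 0 ≤ C ∧ ∀ l u v y, 0 < l → 0 < y →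
      ‖(∫ p : ℝ × ℝ, Φ (l * p.1, p.2) * hFun ω y p.1 * (e2pi (u * p.1) * e2pi (v * p.2))) -
          ∫ t, Φ (0, t) * e2pi (v * t)‖ ≤
        C * l⁻¹ * (1 + (l + 2 * π * |u|) ^ n) * y ^ (n - 1) := by
  obtain ⟨R, hR0, hR⟩ := exists_forall_lt_norm_eq_zero hΦc
  obtain ⟨C, hC0, hC⟩ :=
    exists_norm_integral_modulatedSlice_mul_hFun_sub_le ha hω hωs hω1 hΦ hΦc hn
  refine ⟨2 * R * C, by positivity, fun l u v y hl hy => ?_⟩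
  have hint := integrable_mul_hFun_mul_e2pi ha hω hωs.continuous hΦ.continuous hΦc hl hy u v
  have hzero : ∀ t ∉ Set.Icc (-R) R, ∀ z, Φ (z, t) = 0 := fun t ht z =>
    hR _ ((not_le.mp (abs_le.not.mpr ht)).trans_le (norm_snd_le (z, t)))
  have hint₀ : Integrable fun t => Φ (0, t) * e2pi (v * t) := by
    have : Continuous e2pi := contDiff_e2pi (n := 0).continuous
    have := hΦ.continuous
    refine Continuous.integrable_of_hasCompactSupport (by fun_prop)
      (.intro (isCompact_Icc (a := -R) (b := R)) fun t ht => ?_)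
    rw [hzero t ht, zero_mul]
  rw [Measure.volume_eq_prod] at hint ⊢
  have hint' := hint.integral_prod_right
  simp only [integral_slice_eq_integral_modulatedSlice_mul] at hint'
  rw [integral_prod_symm _ hint]
  simp only [integral_slice_eq_integral_modulatedSlice_mul]
  rw [← integral_sub hint' hint₀, ← setIntegral_eq_integral_of_forall_compl_eq_zero
    (s := Set.Icc (-R) R) fun t ht => by simp [modulatedSlice, hzero t ht]]
  refine (norm_setIntegral_le_of_norm_le_const (by simp) fun t _ => ?_).trans_eq
    (b := C * l⁻¹ * (1 + (l + 2 * π * |u|) ^ n) * y ^ (n - 1) * volume.real (Set.Icc (-R) R)) ?_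
  · rw [← sub_mul, norm_mul, norm_e2pi, mul_one]
    exact hC l u t y hl hy
  · rw [Real.volume_real_Icc_of_le (by linarith)]
    ring

end PlaneIntegral

section AdaptedCoordinates

theorem nrm2_eq_norm_toLp (x : ℝ × ℝ) : nrm2 x = ‖WithLp.toLp 2 x‖ := by
  simp [nrm2, WithLp.prod_norm_eq_of_L2]

theorem nrm2_smul (s : ℝ) (x : ℝ × ℝ) : nrm2 (s • x) = |s| * nrm2 x := by
  rw [nrm2_eq_norm_toLp, nrm2_eq_norm_toLp, WithLp.toLp_smul, norm_smul, norm_eq_abs]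

theorem sq_nrm2 (x : ℝ × ℝ) : nrm2 x ^ 2 = x.1 ^ 2 + x.2 ^ 2 :=
  Real.sq_sqrt (by positivity)

theorem nrm2_zero_left (t : ℝ) : nrm2 (0, t) = |t| := by
  simp [nrm2, Real.sqrt_sq_eq_abs]

theorem norm_le_nrm2 (x : ℝ × ℝ) : ‖x‖ ≤ nrm2 x :=
  max_le (Real.abs_le_sqrt (by linarith [sq_nonneg x.2]))
    (Real.abs_le_sqrt (by linarith [sq_nonneg x.1]))

variable {f : ℝ → ℝ}

theorem contDiff_comp_nrm2 (hf : ContDiff ℝ (⊤ : ℕ∞) f) (heven : ∀ x, f (-x) = f x) :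
    ContDiff ℝ (⊤ : ℕ∞) fun x => f (nrm2 x) := by
  simp only [nrm2_eq_norm_toLp]
  exact (contDiff_comp_norm_of_even hf heven).comp
    (WithLp.prodContinuousLinearEquiv 2 ℝ ℝ ℝ).symm.contDiff

theorem hasCompactSupport_comp_nrm2 (hf : HasCompactSupport f) :
    HasCompactSupport fun x => f (nrm2 x) := by
  obtain ⟨R, -, hR⟩ := exists_forall_lt_norm_eq_zero hf
  refine .intro (isCompact_closedBall (0 : ℝ × ℝ) R) fun x hx => hR _ ?_
  rw [mem_closedBall_zero_iff, not_le] at hx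
  exact hx.trans_le ((norm_le_nrm2 x).trans (le_abs_self _))

theorem integral_comp_linear_prod (f : ℝ × ℝ → ℂ) {a b c d : ℝ} (hdet : a * d - b * c ≠ 0) :
    ∫ p : ℝ × ℝ, f (a * p.1 + b * p.2, c * p.1 + d * p.2) =
      ((|a * d - b * c|⁻¹ : ℝ) : ℂ) * ∫ p, f p := by
  set L := Matrix.toLin (.finTwoProd ℝ) (.finTwoProd ℝ) !![a, b; c, d]
  have hLdet : LinearMap.det L = a * d - b * c := by
    rw [LinearMap.det_toLin, Matrix.det_fin_two_of]
  have hL0 : LinearMap.det L ≠ 0 := by rwa [hLdet]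
  have hL : ∀ p : ℝ × ℝ, L p = (a * p.1 + b * p.2, c * p.1 + d * p.2) :=
    Matrix.toLin_finTwoProd_apply a b c d
  have hemb : MeasurableEmbedding L :=
    (LinearMap.equivOfDetNeZero L hL0).toContinuousLinearEquiv.toHomeomorph.measurableEmbedding
  have h := hemb.integral_map (μ := volume) f
  rw [Measure.map_linearMap_addHaar_eq_smul_addHaar volume hL0, integral_smul_measure,
    ENNReal.toReal_ofReal (abs_nonneg _), hLdet, abs_inv, Complex.real_smul] at h
  simp only [hL] at h
  exact h.symm

theorem integral_comp_smul_add_smul_perp2 (f : ℝ × ℝ → ℂ) {r : ℝ × ℝ} (hr : 0 < nrm2 r)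
    {α β : ℝ} (hα : 0 < α) (hβ : 0 < β) :
    ∫ x, f x = ((α * β * nrm2 r ^ 2 : ℝ) : ℂ) *
      ∫ p : ℝ × ℝ, f ((α * p.1) • r + (β * p.2) • perp2 r) := by
  have hdet : (α * r.1) * (-(β * r.1)) - (β * r.2) * (α * r.2) = -(α * β * nrm2 r ^ 2) := by
    rw [sq_nrm2]
    ring
  have hpos : 0 < α * β * nrm2 r ^ 2 := by positivity
  have h := integral_comp_linear_prod f (hdet.trans_ne (neg_ne_zero.mpr hpos.ne'))
  rw [hdet, abs_neg, abs_of_pos hpos] at h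
  have hcoord : ∀ p : ℝ × ℝ, (α * p.1) • r + (β * p.2) • perp2 r =
      (α * r.1 * p.1 + β * r.2 * p.2, α * r.2 * p.1 + -(β * r.1) * p.2) := fun p => by
    ext <;> simp [perp2] <;> ring
  simp only [hcoord]
  rw [h, ← mul_assoc, ← Complex.ofReal_mul, mul_inv_cancel₀ hpos.ne', Complex.ofReal_one, one_mul]

theorem nrm2_smul_add_smul_perp2 (r : ℝ × ℝ) (s t : ℝ) :
    nrm2 (s • r + t • perp2 r) = nrm2 r * nrm2 (s, t) := by
  rw [nrm2, nrm2, nrm2, ← Real.sqrt_mul (by positivity)]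
  congr 1
  simp only [perp2, Prod.fst_add, Prod.smul_fst, Prod.snd_add, Prod.smul_snd, smul_eq_mul]
  ring

theorem dot2_smul_add_smul_perp2 (w r : ℝ × ℝ) (s t : ℝ) :
    dot2 w (s • r + t • perp2 r) = s * dot2 w r + t * dot2 w (perp2 r) := by
  simp only [dot2, perp2, Prod.fst_add, Prod.smul_fst, Prod.snd_add, Prod.smul_snd, smul_eq_mul]
  ring

theorem dot2_self_smul_add_smul_perp2 (r : ℝ × ℝ) (s t : ℝ) :
    dot2 r (s • r + t • perp2 r) = s * nrm2 r ^ 2 := by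
  rw [dot2_smul_add_smul_perp2, sq_nrm2]
  simp only [dot2, perp2]
  ring

theorem fourierW0_eq_integral_nrm2 (heven : ∀ x, f (-x) = f x) (t : ℝ) :
    fourierW0 f t = ∫ x, (f (nrm2 (0, x)) : ℂ) * e2pi (-t * x) := by
  have habs : ∀ x, f |x| = f x := fun x => by
    rcases abs_choice x with h | h <;> simp [h, heven]
  simp only [fourierW0, nrm2_zero_left, habs, neg_mul, mul_comm t]

theorem nrm2_mul_nrm2_div {R S : ℝ} (hR : 0 < R) (hS : 0 < S) (s t : ℝ) :
    R * nrm2 ((S / R) ^ 2 * S ^ 2 * s, S ^ 3 / R * t) / S ^ 3 = nrm2 (S / R * s, t) := by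
  have hsmul : ((S / R) ^ 2 * S ^ 2 * s, S ^ 3 / R * t) = (S ^ 3 / R) • (S / R * s, t) := by
    rw [Prod.smul_mk, smul_eq_mul, smul_eq_mul]
    congr 1
    ring
  rw [hsmul, nrm2_smul, abs_of_pos (by positivity)]
  field_simp

theorem p2_eq_integral_adapted (ω ω₀ : ℝ → ℝ) {Q : ℝ} (hQ : 0 < Q) {r : ℤ × ℤ}
    (hr : 0 < nrm2 ((r.1 : ℝ), (r.2 : ℝ))) (k : ℕ) (q : ℝ) (w : ℝ × ℝ) {l : ℝ}
    (hl : l = Q ^ ((1 : ℝ) / 2) / nrm2 ((r.1 : ℝ), (r.2 : ℝ))) :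
    p2 ω ω₀ Q r k q w = ((cConst ω * l : ℝ) : ℂ) *
      ∫ p : ℝ × ℝ, (ω₀ (nrm2 (l * p.1, p.2)) : ℂ) * hFun ω (k * q / Q) p.1 *
        (e2pi (-(l ^ 2 * Q * dot2 w ((r.1 : ℝ), (r.2 : ℝ))) * p.1) *
          e2pi (-(Q ^ ((3 : ℝ) / 2) / nrm2 ((r.1 : ℝ), (r.2 : ℝ)) *
            dot2 w (perp2 ((r.1 : ℝ), (r.2 : ℝ)))) * p.2)) := by
  obtain ⟨S, hS, rfl⟩ : ∃ S, 0 < S ∧ S ^ 2 = Q :=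
    ⟨√Q, Real.sqrt_pos.mpr hQ, Real.sq_sqrt hQ.le⟩
  have hS1 : (S ^ 2) ^ ((1 : ℝ) / 2) = S := by
    rw [← Real.sqrt_eq_rpow, Real.sqrt_sq hS.le]
  have hS3 : (S ^ 2) ^ ((3 : ℝ) / 2) = S ^ 3 := by
    rw [← Real.rpow_natCast, ← Real.rpow_natCast, ← Real.rpow_mul hS.le]
    norm_num
  rw [hS1] at hl
  set v : ℝ × ℝ := ((r.1 : ℝ), (r.2 : ℝ))
  have hl0 : 0 < l := hl ▸ div_pos hS hr
  have hdot : ∀ x : ℝ × ℝ, (r.1 : ℝ) * x.1 + (r.2 : ℝ) * x.2 = dot2 v x := fun _ => rfl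
  rw [p2, integral_comp_smul_add_smul_perp2 _ hr (α := l ^ 2 * S ^ 2) (β := S ^ 3 / nrm2 v)
    (by positivity) (by positivity), ← mul_assoc, ← Complex.ofReal_mul]
  simp only [hdot, hS3, nrm2_smul_add_smul_perp2, dot2_self_smul_add_smul_perp2,
    dot2_smul_add_smul_perp2]
  have hscale := nrm2_mul_nrm2_div hr hS
  rw [← hl] at hscale
  have harg : ∀ p : ℝ × ℝ, l ^ 2 * S ^ 2 * p.1 * nrm2 v ^ 2 / (S ^ 2) ^ 2 = p.1 := fun p => by
    rw [hl]
    field_simp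
  have hphase : ∀ p : ℝ × ℝ,
      -(l ^ 2 * S ^ 2 * p.1 * dot2 w v + S ^ 3 / nrm2 v * p.2 * dot2 w (perp2 v)) =
      -(l ^ 2 * S ^ 2 * dot2 w v) * p.1 + -(S ^ 3 / nrm2 v * dot2 w (perp2 v)) * p.2 := fun p => by
    ring
  have hconst : cConst ω / (S ^ 2) ^ 3 * (l ^ 2 * S ^ 2 * (S ^ 3 / nrm2 v) * nrm2 v ^ 2) =
      cConst ω * l := by
    rw [hl]
    field_simp
  simp only [hscale, harg, hphase, hconst, e2pi_add, Complex.ofReal_mul]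

end AdaptedCoordinates

section MainEstimate

variable {ω ω₀ : ℝ → ℝ} {a b : ℝ}

theorem exists_norm_p2_sub_le (ha : 0 < a) (hω : Function.support ω ⊆ Set.Icc a b)
    (hωs : ContDiff ℝ (⊤ : ℕ∞) ω) (hω1 : ∫ x, ω x = 1) (hω₀s : ContDiff ℝ (⊤ : ℕ∞) ω₀)
    (hω₀e : ∀ x, ω₀ (-x) = ω₀ x) (hω₀c : HasCompactSupport ω₀) {n : ℕ} (hn : 2 ≤ n) :
    ∃ C, 0 ≤ C ∧ ∀ Q : ℝ, 0 < Q → ∀ r : ℤ × ℤ, 0 < nrm2 ((r.1 : ℝ), (r.2 : ℝ)) →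
      ∀ (k : ℕ) (q : ℝ), 0 < k * q → ∀ w : ℝ × ℝ, ∀ l : ℝ,
        l = Q ^ ((1 : ℝ) / 2) / nrm2 ((r.1 : ℝ), (r.2 : ℝ)) →
        ‖p2 ω ω₀ Q r k q w -
          ((cConst ω * Q ^ ((1 : ℝ) / 2) / nrm2 ((r.1 : ℝ), (r.2 : ℝ)) : ℝ) : ℂ) *
            fourierW0 ω₀ ((Q ^ ((3 : ℝ) / 2) / nrm2 ((r.1 : ℝ), (r.2 : ℝ))) *
              dot2 w (perp2 ((r.1 : ℝ), (r.2 : ℝ))))‖ ≤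
          C * (1 + (l + 2 * π * (l ^ 2 * (Q * |dot2 w ((r.1 : ℝ), (r.2 : ℝ))|))) ^ n) *
            (k * q / Q) ^ (n - 1) := by
  obtain ⟨K, hK0, hK⟩ := exists_norm_integral_mul_hFun_sub_integral_le ha hω hωs hω1
    (Φ := fun x => (ω₀ (nrm2 x) : ℂ))
    (Complex.ofRealCLM.contDiff.comp (contDiff_comp_nrm2 hω₀s hω₀e))
    ((hasCompactSupport_comp_nrm2 hω₀c).comp_left Complex.ofReal_zero) hn
  refine ⟨|cConst ω| * K, by positivity, fun Q hQ r hr k q hkq w l hl => ?_⟩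
  have hl0 : 0 < l := hl ▸ by positivity
  have hfreq : |-(l ^ 2 * Q * dot2 w ((r.1 : ℝ), (r.2 : ℝ)))| =
      l ^ 2 * (Q * |dot2 w ((r.1 : ℝ), (r.2 : ℝ))|) := by
    rw [abs_neg, abs_mul, abs_of_pos (by positivity), mul_assoc]
  rw [p2_eq_integral_adapted ω ω₀ hQ hr k q w hl, fourierW0_eq_integral_nrm2 hω₀e,
    mul_div_assoc (cConst ω), ← hl, ← mul_sub, norm_mul, Complex.norm_real, norm_mul,
    norm_eq_abs, norm_of_nonneg hl0.le, ← hfreq]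
  refine (mul_le_mul_of_nonneg_left (hK l _ _ _ hl0 (div_pos hkq hQ)) (by positivity)).trans_eq ?_
  field_simp

theorem pow_mul_pow_pred_le_rpow_neg {Q δ N Y y : ℝ} {n : ℕ} (hQ : 1 ≤ Q) (hn : 1 ≤ n)
    (hnN : N + 1 ≤ δ * n) (hy : Q⁻¹ ≤ y) (hY : 0 ≤ Y) (hYy : Y * y ≤ Q ^ (-δ)) :
    Y ^ n * y ^ (n - 1) ≤ Q ^ (-N) := by
  have hQ0 : 0 < Q := one_pos.trans_le hQ
  have hy0 : 0 < y := (inv_pos.mpr hQ0).trans_le hy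
  calc Y ^ n * y ^ (n - 1) = (Y * y) ^ n * y⁻¹ := by
        rw [mul_pow, pow_sub₀ y hy0.ne' hn, pow_one, mul_assoc]
    _ ≤ (Q ^ (-δ)) ^ n * Q := by
        gcongr
        exact inv_le_of_inv_le₀ hQ0 hy
    _ = Q ^ (-δ * n + 1) := by
        rw [Real.rpow_add_one hQ0.ne', Real.rpow_mul hQ0.le, Real.rpow_natCast]
    _ ≤ Q ^ (-N) := Real.rpow_le_rpow_of_exponent_le hQ (by linarith)

theorem one_add_pow_frequency_le {l lam X : ℝ} (hl : 0 ≤ l) (hlam : l ≤ lam) (hX : 0 ≤ X) (n : ℕ) :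
    1 + (l + 2 * π * (l ^ 2 * X)) ^ n ≤ (1 + (lam + 2 * π * lam ^ 2) ^ n) * (X + 1) ^ n := by
  have hlam0 : 0 ≤ lam := hl.trans hlam
  have hbase : l + 2 * π * (l ^ 2 * X) ≤ (lam + 2 * π * lam ^ 2) * (X + 1) := by
    calc l + 2 * π * (l ^ 2 * X) ≤ lam + 2 * π * (lam ^ 2 * X) := by gcongr
      _ ≤ lam + 2 * π * (lam ^ 2 * X) + (lam * X + 2 * π * lam ^ 2) :=
        le_add_of_nonneg_right (by positivity)
      _ = _ := by ring
  have hone : 1 ≤ (X + 1) ^ n := one_le_pow₀ (by linarith)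
  rw [add_mul, one_mul, ← mul_pow]
  gcongr

end MainEstimate

theorem statement8_general {ω ω₀ : ℝ → ℝ} {a b c : ℝ} (ha : 0 < a) (hc : 0 < c)
    (hω : Function.support ω ⊆ Set.Icc a b) (hωs : ContDiff ℝ (⊤ : ℕ∞) ω) (hω1 : ∫ x, ω x = 1)
    (hω₀s : ContDiff ℝ (⊤ : ℕ∞) ω₀) (hω₀e : ∀ x, ω₀ (-x) = ω₀ x) (hω₀c : HasCompactSupport ω₀)
    {δ : ℝ} (hδ : 0 < δ) (N : ℝ) :
    ∃ C : ℝ, 0 < C ∧ ∀ Q : ℝ, 1 ≤ Q → ∀ r : ℤ × ℤ,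
      c * Q ^ ((1 : ℝ) / 2) ≤ nrm2 ((r.1 : ℝ), (r.2 : ℝ)) →
      ∀ (k : ℕ) (q : ℝ), 1 ≤ k * q → ∀ w : ℝ × ℝ,
        k * q * (Q * |dot2 w ((r.1 : ℝ), (r.2 : ℝ))| + 1) ≤ Q ^ (1 - δ) →
        ‖p2 ω ω₀ Q r k q w -
          ((cConst ω * Q ^ ((1 : ℝ) / 2) / nrm2 ((r.1 : ℝ), (r.2 : ℝ)) : ℝ) : ℂ) *
            fourierW0 ω₀ ((Q ^ ((3 : ℝ) / 2) / nrm2 ((r.1 : ℝ), (r.2 : ℝ))) *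
              dot2 w (perp2 ((r.1 : ℝ), (r.2 : ℝ))))‖ ≤ C * Q ^ (-N) := by
  obtain ⟨n, hnN, hn⟩ : ∃ n : ℕ, N + 1 ≤ δ * n ∧ 2 ≤ n :=
    ⟨max 2 ⌈(N + 1) / δ⌉₊, (div_le_iff₀' hδ).mp ((Nat.le_ceil _).trans (by simp)),
      le_max_left _ _⟩
  obtain ⟨K, hK0, hK⟩ := exists_norm_p2_sub_le ha hω hωs hω1 hω₀s hω₀e hω₀c hn
  set κ := 1 + (c⁻¹ + 2 * π * c⁻¹ ^ 2) ^ n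
  refine ⟨K * κ + 1, by positivity, fun Q hQ r hr k q hkq w hw => ?_⟩
  have hQ0 : 0 < Q := one_pos.trans_le hQ
  have hr0 : 0 < nrm2 ((r.1 : ℝ), (r.2 : ℝ)) := lt_of_lt_of_le (by positivity) hr
  set X := Q * |dot2 w ((r.1 : ℝ), (r.2 : ℝ))|
  have hl : Q ^ ((1 : ℝ) / 2) / nrm2 ((r.1 : ℝ), (r.2 : ℝ)) ≤ c⁻¹ := by
    rwa [div_le_iff₀ hr0, ← div_eq_inv_mul, le_div_iff₀' hc]
  have hY : (X + 1) * (k * q / Q) ≤ Q ^ (-δ) := by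
    rw [sub_eq_add_neg, Real.rpow_add hQ0, Real.rpow_one] at hw
    rw [← mul_div_assoc, div_le_iff₀' hQ0, mul_comm]
    exact hw
  have hy : Q⁻¹ ≤ k * q / Q := by
    rw [inv_eq_one_div]
    gcongr
  calc _ ≤ K * (κ * (X + 1) ^ n) * (k * q / Q) ^ (n - 1) :=
        (hK Q hQ0 r hr0 k q (one_pos.trans_le hkq) w _ rfl).trans
          (by gcongr; exact one_add_pow_frequency_le (by positivity) hl (by positivity) n)
    _ = K * κ * ((X + 1) ^ n * (k * q / Q) ^ (n - 1)) := by ring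
    _ ≤ K * κ * Q ^ (-N) := by
        gcongr
        exact pow_mul_pow_pred_le_rpow_neg hQ (one_le_two.trans hn) hnN hy (by positivity) hY
    _ ≤ (K * κ + 1) * Q ^ (-N) := by
        gcongr
        exact le_add_of_nonneg_right zero_le_one

/-- asymptotic evaluation of `p_{2,r,k,q}` (Lemma 3.6). -/
theorem statement8
    (ω : ℝ → ℝ) (hω_smooth : ContDiff ℝ (⊤ : ℕ∞) ω)
    (hω_nonneg : ∀ x, 0 ≤ ω x)
    (hω_supp : Function.support ω ⊆ Set.Ioo (1/2 : ℝ) 1)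
    (hω_int : ∫ x : ℝ, ω x = 1)
    (ω₀ : ℝ → ℝ) (hω₀_smooth : ContDiff ℝ (⊤ : ℕ∞) ω₀)
    (hω₀_nonneg : ∀ x, 0 ≤ ω₀ x)
    (hω₀_even : ∀ x, ω₀ (-x) = ω₀ x)
    (hω₀_supp : Function.support ω₀ ⊆ Set.Ioo (-(1/2) : ℝ) (1/2))
    (hω₀_one : ω₀ 0 = 1)
    (δ N : ℝ) (hδ : 0 < δ) (hN : 0 < N) :
    ∃ C : ℝ, 0 < C ∧ ∀ Q : ℝ, 1 ≤ Q → ∀ r : ℤ × ℤ,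
      Q ^ ((1 : ℝ) / 2) / 2 ≤ nrm2 ((r.1 : ℝ), (r.2 : ℝ)) →
      nrm2 ((r.1 : ℝ), (r.2 : ℝ)) ≤ Q ^ ((1 : ℝ) / 2) →
      ∀ k q : ℕ, 1 ≤ k → 1 ≤ q → (k : ℝ) * q ≤ Q →
      ∀ w : ℝ × ℝ,
        (k : ℝ) * q * (Q * |dot2 w ((r.1 : ℝ), (r.2 : ℝ))| + 1) ≤ Q ^ (1 - δ) →
        ‖p2 ω ω₀ Q r k (q : ℝ) w -
          ((cConst ω * Q ^ ((1 : ℝ) / 2) / nrm2 ((r.1 : ℝ), (r.2 : ℝ)) : ℝ) : ℂ) *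
            fourierW0 ω₀ ((Q ^ ((3 : ℝ) / 2) / nrm2 ((r.1 : ℝ), (r.2 : ℝ))) *
              dot2 w (perp2 ((r.1 : ℝ), (r.2 : ℝ))))‖
          ≤ C * Q ^ (-N) := by
  obtain ⟨C, hC, h⟩ := statement8_general one_half_pos one_half_pos
    (hω_supp.trans Set.Ioo_subset_Icc_self) hω_smooth hω_int hω₀_smooth hω₀_even
    (.of_support_subset_isCompact isCompact_Icc (hω₀_supp.trans Set.Ioo_subset_Icc_self)) hδ N
  exact ⟨C, hC, fun Q hQ r hr _ k q hk hq _ => h Q hQ r (by linarith) k q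
    (one_le_mul_of_one_le_of_one_le (by exact_mod_cast hk) (by exact_mod_cast hq))⟩
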